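/- arXiv:2008.06906 — 3 statements merged into one kernel-verified Lean document; each statement's English description precedes it below -/
import Mathlib

section
/- Let G : ℝⁿ × ℝⁿ → ℝⁿ be a C¹ map whose components are positively 2-homogeneous in the second variable, and let S be the associated spray S(x,y) = (y, −2G(x,y)). Suppose ω : ℝⁿ × ℝⁿ → (alternating bilinear forms on ℝⁿ × ℝⁿ) is any map and H : ℝⁿ × ℝⁿ → ℝ is differentiable such that for every point u and every i = 1,…,n, dH_u(δ/δx_i(u)) = ω_u(S(u), δ/δx_i(u)). Then dH_u(S(u)) = 0 for every u; i.e. H is a constant of motion for S. -/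
/-- The semi-spray `S(x,y) = (y, -2 G(x,y))` associated to coefficient
functions `G : ℝⁿ × ℝⁿ → ℝⁿ`. -/
noncomputable def spray (n : ℕ) (G : (Fin n → ℝ) × (Fin n → ℝ) → Fin n → ℝ) :
    (Fin n → ℝ) × (Fin n → ℝ) → (Fin n → ℝ) × (Fin n → ℝ) :=
  fun u => (u.2, fun a => -2 * G u a)

/-- The horizontal vector field `δ/δx_i(x,y) = (e_i, -(∂G¹/∂y_i, …, ∂Gⁿ/∂y_i))`
associated to the semi-spray with coefficients `G`. -/
noncomputable def horiz (n : ℕ) (G : (Fin n → ℝ) × (Fin n → ℝ) → Fin n → ℝ)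
    (i : Fin n) : (Fin n → ℝ) × (Fin n → ℝ) → (Fin n → ℝ) × (Fin n → ℝ) :=
  fun u => (Pi.single i 1, fun a => -(fderiv ℝ G u (0, Pi.single i 1) a))

/-- if `G` is `C¹` and positively `2`-homogeneous in `y` (so that
`S` is a spray), `ω` is any field of alternating bilinear forms, and `H` is
differentiable with `dH_u(δ/δx_i(u)) = ω_u(S(u), δ/δx_i(u))` for all `u, i`,
then `dH_u(S(u)) = 0` for all `u`, i.e. `H` is a constant of motion for `S`. -/
theorem spray_constant_of_motion
    (n : ℕ) (G : (Fin n → ℝ) × (Fin n → ℝ) → Fin n → ℝ)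
    (hG : ContDiff ℝ 1 G)
    (hhom : ∀ (x y : Fin n → ℝ) (l : ℝ), 0 < l → G (x, l • y) = l ^ 2 • G (x, y))
    (ω : (Fin n → ℝ) × (Fin n → ℝ) →
      ((Fin n → ℝ) × (Fin n → ℝ)) [⋀^Fin 2]→ₗ[ℝ] ℝ)
    (H : (Fin n → ℝ) × (Fin n → ℝ) → ℝ) (hH : Differentiable ℝ H)
    (hmain : ∀ u, ∀ i : Fin n,
      fderiv ℝ H u (horiz n G i u) = ω u ![spray n G u, horiz n G i u]) :
    ∀ u, fderiv ℝ H u (spray n G u) = 0 := by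
  intro u
  have hEuler : fderiv ℝ G u (0, u.2) = (2 : ℝ) • G u := by
    have hd : HasFDerivAt G (fderiv ℝ G u) ((u.1, (1 : ℝ) • u.2)) := by
      have := (hG.differentiable (by norm_num) u).hasFDerivAt
      simpa using this
    have hc : HasDerivAt (fun l : ℝ => (u.1, l • u.2)) ((0 : Fin n → ℝ), (1 : ℝ) • u.2) 1 :=
      (hasDerivAt_const (1 : ℝ) u.1).prodMk ((hasDerivAt_id (1 : ℝ)).smul_const u.2)
    have h1 : HasDerivAt (fun l : ℝ => G (u.1, l • u.2))
        (fderiv ℝ G u (0, (1 : ℝ) • u.2)) 1 := hd.comp_hasDerivAt (1 : ℝ) hc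
    have h2 : HasDerivAt (fun l : ℝ => l ^ 2 • G u) ((2 : ℝ) • G u) 1 := by
      have := (hasDerivAt_pow 2 (1 : ℝ)).smul_const (G u)
      simpa using this
    have h3 : (fun l : ℝ => G (u.1, l • u.2)) =ᶠ[nhds 1] (fun l : ℝ => l ^ 2 • G u) := by
      filter_upwards [lt_mem_nhds (zero_lt_one' ℝ)] with l hl
      exact hhom u.1 u.2 l hl
    have h4 := h1.unique (h2.congr_of_eventuallyEq h3)
    simpa using h4
  have hS : spray n G u = ∑ i, u.2 i • horiz n G i u := by
    have hy : u.2 = ∑ i, u.2 i • (Pi.single i 1 : Fin n → ℝ) := by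
      ext a
      simp [Finset.sum_apply, Pi.single_apply]
    have hy2 : ((0 : Fin n → ℝ), u.2)
        = ∑ i, u.2 i • ((0 : Fin n → ℝ), (Pi.single i 1 : Fin n → ℝ)) := by
      refine Prod.ext ?_ ?_
      · simp [Prod.fst_sum]
      · simpa [Prod.snd_sum] using hy
    refine Prod.ext ?_ ?_
    · rw [Prod.fst_sum]
      exact hy
    · rw [Prod.snd_sum]
      ext a
      have h := congrFun hEuler a
      rw [hy2, map_sum, Finset.sum_apply] at h
      simp only [map_smul, Pi.smul_apply, smul_eq_mul] at h
      simp only [spray, horiz, Finset.sum_apply, Prod.smul_snd, Pi.smul_apply, smul_eq_mul,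
        mul_neg, Finset.sum_neg_distrib]
      rw [h]
      ring
  have key : fderiv ℝ H u (spray n G u) = ω u ![spray n G u, spray n G u] := by
    let L : ((Fin n → ℝ) × (Fin n → ℝ)) →ₗ[ℝ] ℝ :=
      (ω u).toMultilinearMap.toLinearMap ![spray n G u, 0] 1
    have hL : ∀ v, L v = ω u ![spray n G u, v] := by
      intro v
      change ω u (Function.update ![spray n G u, 0] 1 v) = _
      congr 1
      ext j : 1
      fin_cases j <;> simp
    rw [← hL]
    have e : ∀ i, fderiv ℝ H u (horiz n G i u) = L (horiz n G i u) := fun i => by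
      rw [hL, hmain]
    have e1 : fderiv ℝ H u (∑ i, u.2 i • horiz n G i u) = L (∑ i, u.2 i • horiz n G i u) := by
      simp only [map_sum, map_smul, e]
    rw [← hS] at e1
    exact e1
  rw [key]
  exact (ω u).map_eq_zero_of_eq _ (i := 0) (j := 1) (by simp) (by simp)
end

section
/- Let G : ℝⁿ × ℝⁿ → ℝⁿ be a C¹ map whose components are positively 2-homogeneous in the second variable, and let S be the associated spray S(x,y) = (y, −2G(x,y)). Suppose ω : ℝⁿ × ℝⁿ → (alternating bilinear forms on ℝⁿ × ℝⁿ) and a differentiable H : ℝⁿ × ℝⁿ → ℝ satisfy dH_u(δ/δx_i(u)) = ω_u(S(u), δ/δx_i(u)) for all u and all i. Then for every C² curve x : ℝ → ℝⁿ satisfying x''(t) = −2G(x(t), x'(t)) for all t, the function t ↦ H(x(t), x'(t)) is constant. -/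
/-- under the hypotheses of Statement 0, the function
`t ↦ H(x(t), x'(t))` is constant along every `C²` solution of
`x''(t) = -2 G(x(t), x'(t))`. -/
theorem spray_constant_along_solutions
    (n : ℕ) (G : (Fin n → ℝ) × (Fin n → ℝ) → Fin n → ℝ)
    (hG : ContDiff ℝ 1 G)
    (hhom : ∀ (x y : Fin n → ℝ) (l : ℝ), 0 < l → G (x, l • y) = l ^ 2 • G (x, y))
    (ω : (Fin n → ℝ) × (Fin n → ℝ) →
      ((Fin n → ℝ) × (Fin n → ℝ)) [⋀^Fin 2]→ₗ[ℝ] ℝ)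
    (H : (Fin n → ℝ) × (Fin n → ℝ) → ℝ) (hH : Differentiable ℝ H)
    (hmain : ∀ u, ∀ i : Fin n,
      fderiv ℝ H u (horiz n G i u) = ω u ![spray n G u, horiz n G i u]) :
    ∀ x : ℝ → Fin n → ℝ, ContDiff ℝ 2 x →
      (∀ t : ℝ, deriv (deriv x) t = fun a => -2 * G (x t, deriv x t) a) →
      ∀ s t : ℝ, H (x s, deriv x s) = H (x t, deriv x t) := by
  have euler : ∀ u : (Fin n → ℝ) × (Fin n → ℝ), fderiv ℝ G u (0, u.2) = (2 : ℝ) • G u := by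
    rintro ⟨p, y⟩
    have hd : HasFDerivAt G (fderiv ℝ G (p, y)) (p, (1 : ℝ) • y) := by
      rw [one_smul]
      exact (hG.differentiable (by norm_num) (p, y)).hasFDerivAt
    have hc : HasDerivAt (fun l : ℝ => (p, l • y)) ((0 : Fin n → ℝ), (1 : ℝ) • y) 1 :=
      (hasDerivAt_const (1 : ℝ) p).prodMk ((hasDerivAt_id (1 : ℝ)).smul_const y)
    have h1 : HasDerivAt (fun l : ℝ => G (p, l • y)) (fderiv ℝ G (p, y) (0, (1 : ℝ) • y)) 1 :=
      hd.comp_hasDerivAt (1 : ℝ) hc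
    have h2 : HasDerivAt (fun l : ℝ => l ^ 2 • G (p, y)) ((2 : ℝ) • G (p, y)) 1 := by
      have := (hasDerivAt_pow 2 (1 : ℝ)).smul_const (G (p, y))
      simpa using this
    have h3 : (fun l : ℝ => G (p, l • y)) =ᶠ[nhds 1] (fun l : ℝ => l ^ 2 • G (p, y)) := by
      filter_upwards [lt_mem_nhds (zero_lt_one : (0 : ℝ) < 1)] with l hl
      exact hhom p y l hl
    have := h1.unique (h2.congr_of_eventuallyEq h3)
    simpa using this
  have hsum : ∀ u, ∑ i, u.2 i • horiz n G i u = spray n G u := by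
    intro u
    have hy : ∑ i, u.2 i • (Pi.single i (1 : ℝ) : Fin n → ℝ) = u.2 := by
      ext j
      simp [Finset.sum_apply, Pi.single_apply]
    have key : ∀ i, horiz n G i u = (Pi.single i (1 : ℝ), -(fderiv ℝ G u (0, Pi.single i 1))) :=
      fun i => rfl
    have hz : ∑ i, u.2 i • fderiv ℝ G u (0, Pi.single i 1) = (2 : ℝ) • G u := by
      rw [← euler u]
      have h0 : ((0 : Fin n → ℝ), u.2) =
          ∑ i, u.2 i • ((0 : Fin n → ℝ), (Pi.single i (1 : ℝ) : Fin n → ℝ)) := by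
        ext1
        · simp [Prod.fst_sum]
        · rw [Prod.snd_sum]
          exact hy.symm
      rw [h0, map_sum]
      simp only [map_smul]
    ext1
    · rw [Prod.fst_sum]
      exact hy
    · rw [Prod.snd_sum]
      simp only [key, Prod.smul_snd, smul_neg, Finset.sum_neg_distrib, hz]
      ext a
      simp [spray]
  have hzero : ∀ u, fderiv ℝ H u (spray n G u) = 0 := by
    intro u
    have hω : ∑ i, u.2 i • ω u ![spray n G u, horiz n G i u] = ω u ![spray n G u, spray n G u] := by
      have hl : ∀ v, ω u ![spray n G u, v] =
          (ω u).toMultilinearMap.toLinearMap ![spray n G u, 0] 1 v := by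
        intro v
        simp only [MultilinearMap.toLinearMap_apply]
        change _ = ω u _
        congr 1
        ext j : 1
        fin_cases j <;> simp
      simp only [hl]
      simp only [← map_smul]
      rw [← map_sum, hsum]
    calc fderiv ℝ H u (spray n G u) = fderiv ℝ H u (∑ i, u.2 i • horiz n G i u) := by rw [hsum]
      _ = ∑ i, u.2 i • ω u ![spray n G u, horiz n G i u] := by
        rw [map_sum]
        simp only [map_smul, hmain]
      _ = 0 := by
        rw [hω]
        exact (ω u).map_eq_zero_of_eq _ (i := 0) (j := 1) (by simp) (by simp)
  intro x hx hode s t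
  have hx1 : Differentiable ℝ x := hx.differentiable (by norm_num)
  have hx2 : Differentiable ℝ (deriv x) := by
    have h : ContDiff ℝ (1 + 1) x := by
      rw [one_add_one_eq_two]
      exact hx
    exact (contDiff_succ_iff_deriv.1 h).2.2.differentiable (by norm_num)
  have hder : ∀ r, HasDerivAt (fun r => H (x r, deriv x r)) 0 r := by
    intro r
    have hc : HasDerivAt (fun r => (x r, deriv x r)) (deriv x r, deriv (deriv x) r) r :=
      (hx1 r).hasDerivAt.prodMk (hx2 r).hasDerivAt
    have h := (hH (x r, deriv x r)).hasFDerivAt.comp_hasDerivAt r hc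
    rw [hode r] at h
    have hz := hzero (x r, deriv x r)
    rw [← hz]
    exact h
  exact is_const_of_deriv_eq_zero (fun r => (hder r).differentiableAt) (fun r => (hder r).deriv) s t
end

section
/- Let G : ℝⁿ × ℝⁿ → ℝⁿ be a C¹ map whose components are positively 2-homogeneous in the second variable, and let S(x,y) = (y, −2G(x,y)) be the associated spray. Let A : ℝⁿ × ℝⁿ → (skew-symmetric (2n)×(2n) real matrices) and f = (f₁,…,fₙ) : ℝⁿ × ℝⁿ → ℝⁿ be any maps, and suppose H : ℝⁿ × ℝⁿ → ℝ is differentiable with dH_u(v) = ⟨A(u)·S(u), v⟩ + Σ_{a=1}^n f_a(u)·(v_{n+a} + Σ_{i=1}^n ∂G^a/∂y_i(u)·v_i) for every u and every v = (v₁,…,v_{2n}) ∈ ℝ²ⁿ, where ⟨·,·⟩ is the Euclidean inner product on ℝ²ⁿ. Then dH_u(S(u)) = 0 for every u, i.e. H is a constant of motion for S. -/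
open scoped Matrix

/-- Identification of `ℝⁿ × ℝⁿ` with `ℝ²ⁿ`: the first `n` coordinates are the
base coordinates, the last `n` ones the fibre coordinates. -/
noncomputable def toR2n (n : ℕ) (u : (Fin n → ℝ) × (Fin n → ℝ)) :
    Fin (n + n) → ℝ :=
  Fin.append u.1 u.2

/-- if `G` is `C¹` and positively `2`-homogeneous in `y`,
`A` is a field of skew-symmetric `2n × 2n` matrices, `f = (f₁,…,fₙ)` arbitrary,
and `H` is differentiable with
`dH_u(v) = ⟨A(u)·S(u), v⟩ + Σ_a f_a(u)·(v_{n+a} + Σ_i ∂Gᵃ/∂y_i(u)·v_i)`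
for all `u, v`, then `dH_u(S(u)) = 0` for all `u`. -/
theorem spray_constant_of_motion_coords
    (n : ℕ) (G : (Fin n → ℝ) × (Fin n → ℝ) → Fin n → ℝ)
    (hG : ContDiff ℝ 1 G)
    (hhom : ∀ (x y : Fin n → ℝ) (l : ℝ), 0 < l → G (x, l • y) = l ^ 2 • G (x, y))
    (A : (Fin n → ℝ) × (Fin n → ℝ) → Matrix (Fin (n + n)) (Fin (n + n)) ℝ)
    (hA : ∀ u, (A u)ᵀ = -(A u))
    (f : (Fin n → ℝ) × (Fin n → ℝ) → Fin n → ℝ)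
    (H : (Fin n → ℝ) × (Fin n → ℝ) → ℝ) (hH : Differentiable ℝ H)
    (hmain : ∀ u, ∀ v : (Fin n → ℝ) × (Fin n → ℝ),
      fderiv ℝ H u v =
        (A u *ᵥ toR2n n (spray n G u)) ⬝ᵥ toR2n n v +
        ∑ a : Fin n, f u a *
          (v.2 a + ∑ i : Fin n, fderiv ℝ G u (0, Pi.single i 1) a * v.1 i)) :
    ∀ u, fderiv ℝ H u (spray n G u) = 0 := by
  intro u
  rw [hmain]
  have h1 : ∀ w : Fin (n + n) → ℝ, (A u *ᵥ w) ⬝ᵥ w = 0 := by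
    intro w
    have h : (A u *ᵥ w) ⬝ᵥ w = -((A u *ᵥ w) ⬝ᵥ w) := by
      calc (A u *ᵥ w) ⬝ᵥ w = w ⬝ᵥ (A u *ᵥ w) := dotProduct_comm _ _
        _ = (w ᵥ* A u) ⬝ᵥ w := Matrix.dotProduct_mulVec _ _ _
        _ = ((A u)ᵀ *ᵥ w) ⬝ᵥ w := by rw [Matrix.mulVec_transpose]
        _ = -((A u *ᵥ w) ⬝ᵥ w) := by rw [hA, Matrix.neg_mulVec, neg_dotProduct]
    linarith
  have hd : HasFDerivAt G (fderiv ℝ G u) u :=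
    (hG.differentiable (by norm_num) u).hasFDerivAt
  have h2 : fderiv ℝ G u (0, u.2) = (2 : ℝ) • G u := by
    have hc : HasDerivAt (fun l : ℝ => (u.1, l • u.2)) (0, u.2) 1 := by
      have := (hasDerivAt_const (1 : ℝ) u.1).prodMk ((hasDerivAt_id (1 : ℝ)).smul_const u.2)
      simpa using this
    have hd' : HasFDerivAt G (fderiv ℝ G u) ((fun l : ℝ => (u.1, l • u.2)) 1) := by
      simpa using hd
    have e1 := hd'.comp_hasDerivAt (1 : ℝ) hc
    have e2 : HasDerivAt (fun l : ℝ => l ^ 2 • G u) ((2 : ℝ) • G u) 1 := by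
      have := (hasDerivAt_pow 2 (1 : ℝ)).smul_const (G u)
      simpa using this
    refine e1.unique (e2.congr_of_eventuallyEq ?_)
    filter_upwards [lt_mem_nhds (show (0 : ℝ) < 1 by norm_num)] with l hl
    exact hhom u.1 u.2 l hl
  have h3 : fderiv ℝ G u (0, u.2) = ∑ i, u.2 i • fderiv ℝ G u (0, Pi.single i 1) := by
    have h := LinearMap.pi_apply_eq_sum_univ
      ((fderiv ℝ G u).comp (ContinuousLinearMap.inr ℝ (Fin n → ℝ) (Fin n → ℝ))).toLinearMap u.2
    have hs : ∀ i : Fin n, (Pi.single i 1 : Fin n → ℝ) = fun j => if i = j then 1 else 0 := by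
      intro i
      ext j
      simp [Pi.single_apply, eq_comm]
    simp only [hs]
    simpa using h
  rw [h1, zero_add]
  refine Finset.sum_eq_zero fun a _ => ?_
  have h4 := congrFun (h3.symm.trans h2) a
  simp only [Finset.sum_apply, Pi.smul_apply, smul_eq_mul] at h4
  have h5 : ∑ i, fderiv ℝ G u (0, Pi.single i 1) a * u.2 i = 2 * G u a := by
    rw [← h4]; exact Finset.sum_congr rfl fun i _ => mul_comm _ _
  simp only [spray]
  rw [h5]; ring
end
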